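/- Let m ≥ 2, let U ⊆ ℝ^m be open, let (f, ν) be a front on U with values in ℝ^{m+1}, let p ∈ U be an A₂-point, and let Φ : V → U be a coordinate system as in the coordinate lemma, i.e. a diffeomorphism onto a neighborhood of p with Φ(o) = p such that f̃ := f∘Φ, ν̃ := ν∘Φ satisfy: Φ^{−1}(Σ) = {u_m = 0}; ∂_m f̃ = 0 on {u_m = 0}; and ⟨∂_j f̃, ∂_m∂_m f̃⟩ = 0 at o for j = 1,…,m−1. Then at the point o, both the tangential part D_m φ_m := ∂_m∂_m f̃ − ⟨∂_m∂_m f̃, ν̃⟩ν̃ and the vector ψ_m := ∂_m ν̃ are nonzero and orthogonal to each of ∂_1 f̃,…,∂_{m−1} f̃; in particular, D_m φ_m and ψ_m are proportional (each is a nonzero scalar multiple of the other) at o. -/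

import Mathlib

open scoped Matrix

noncomputable section

/-- Partial derivative of a vector-valued map in the `k`-th coordinate direction. -/
def pd {m N : ℕ} (k : Fin m) (f : (Fin m → ℝ) → (Fin N → ℝ)) :
    (Fin m → ℝ) → (Fin N → ℝ) :=
  fun q => fderiv ℝ f q (Pi.single k 1)

/-- The Jacobian function `λ(q) = det(∂_1 f, …, ∂_m f, ν)` of a frontal `(f, ν)`. -/
def lamb {m : ℕ} (f ν : (Fin m → ℝ) → (Fin (m + 1) → ℝ)) (q : Fin m → ℝ) : ℝ :=
  Matrix.det (Matrix.of (Fin.snoc (fun k : Fin m => pd k f q) (ν q)))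

/-- `p` is an `A₂`-point of the frontal `(f, ν)`: a nondegenerate singular point at which
the null direction is transversal to the singular hypersurface, i.e. `dλ_p(η) ≠ 0` for
(any) nonzero null vector `η`. -/
def IsA2 {m : ℕ} (f ν : (Fin m → ℝ) → (Fin (m + 1) → ℝ)) (p : Fin m → ℝ) : Prop :=
  lamb f ν p = 0 ∧ fderiv ℝ (lamb f ν) p ≠ 0 ∧
  ∀ X : Fin m → ℝ, X ≠ 0 → fderiv ℝ f p X = 0 → fderiv ℝ (lamb f ν) p X ≠ 0

theorem aux_dot_fderiv {m N : ℕ} (a b : (Fin m → ℝ) → (Fin N → ℝ)) (x : Fin m → ℝ) (k : Fin m)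
    (ha : DifferentiableAt ℝ a x) (hb : DifferentiableAt ℝ b x) (c : ℝ)
    (h : ∀ᶠ y in nhds x, a y ⬝ᵥ b y = c) :
    pd k a x ⬝ᵥ b x + a x ⬝ᵥ pd k b x = 0 := by
  have h1 : HasFDerivAt (fun y => a y ⬝ᵥ b y)
      (∑ i, ((a x i) • (ContinuousLinearMap.proj (R := ℝ) (φ := fun _ : Fin N => ℝ) i).comp (fderiv ℝ b x)
        + (b x i) • (ContinuousLinearMap.proj (R := ℝ) (φ := fun _ : Fin N => ℝ) i).comp (fderiv ℝ a x))) x := by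
    unfold dotProduct
    refine HasFDerivAt.fun_sum fun i _ => ?_
    have h2 := (hasFDerivAt_pi'.1 ha.hasFDerivAt) i
    have h3 := (hasFDerivAt_pi'.1 hb.hasFDerivAt) i
    exact h2.mul h3
  have h2 : HasFDerivAt (fun y => a y ⬝ᵥ b y) (0 : (Fin m → ℝ) →L[ℝ] ℝ) x :=
    (hasFDerivAt_const c x).congr_of_eventuallyEq h
  have h3 := congrArg (fun L => L (Pi.single k 1)) (h1.unique h2)
  simp only [_root_.sum_apply, _root_.add_apply, _root_.smul_apply,
    ContinuousLinearMap.comp_apply, ContinuousLinearMap.proj_apply, smul_eq_mul,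
    _root_.zero_apply, Finset.sum_add_distrib] at h3
  unfold pd dotProduct
  rw [← h3, add_comm]
  congr 1
  exact Finset.sum_congr rfl fun i _ => mul_comm _ _

theorem aux_contdiff_pd {m N : ℕ} (a : (Fin m → ℝ) → (Fin N → ℝ)) (V : Set (Fin m → ℝ))
    (hV : IsOpen V) (ha : ContDiffOn ℝ (⊤ : ℕ∞) a V) (k : Fin m) :
    ContDiffOn ℝ (⊤ : ℕ∞) (pd k a) V := by
  unfold pd
  exact (ha.fderiv_of_isOpen hV (by simp)).clm_apply contDiffOn_const

theorem aux_symm {m N : ℕ} (a : (Fin m → ℝ) → (Fin N → ℝ)) (x : Fin m → ℝ)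
    (ha : ContDiffAt ℝ (⊤ : ℕ∞) a x) (j k : Fin m) :
    pd j (pd k a) x = pd k (pd j a) x := by
  have hd : DifferentiableAt ℝ (fderiv ℝ a) x :=
    (ha.fderiv_right (m := 1) (by norm_cast)).differentiableAt (by simp)
  have key : ∀ u v : Fin m → ℝ, fderiv ℝ (fun q => fderiv ℝ a q u) x v
      = fderiv ℝ (fderiv ℝ a) x v u := by
    intro u v
    rw [fderiv_clm_apply hd (by fun_prop)]
    simp
  have hs : IsSymmSndFDerivAt ℝ a x := ha.isSymmSndFDerivAt (by simp; norm_cast)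
  unfold pd
  rw [key, key]
  exact hs _ _

theorem aux_linalg {m : ℕ} (M : Fin m) (r : Fin m → Fin (m + 1) → ℝ)
    (w n ψ : Fin (m + 1) → ℝ)
    (hdet : Matrix.det (Matrix.of (Fin.snoc (Function.update r M w) n : Fin (m+1) → Fin (m+1) → ℝ)) ≠ 0)
    (hn : n ⬝ᵥ n = 1) (hrn : ∀ j, j ≠ M → r j ⬝ᵥ n = 0) (hrw : ∀ j, j ≠ M → r j ⬝ᵥ w = 0)
    (hψ : ψ ≠ 0) (hψn : ψ ⬝ᵥ n = 0) (hψr : ∀ j, j ≠ M → ψ ⬝ᵥ r j = 0) :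
    (w - (w ⬝ᵥ n) • n ≠ 0) ∧ ψ ≠ 0 ∧
    (∀ j, j ≠ M → (w - (w ⬝ᵥ n) • n) ⬝ᵥ r j = 0 ∧ ψ ⬝ᵥ r j = 0) ∧
    ∃ t : ℝ, t ≠ 0 ∧ w - (w ⬝ᵥ n) • n = t • ψ := by
  set w' := w - (w ⬝ᵥ n) • n with hw'
  have hker : ∀ z : Fin (m+1) → ℝ, (∀ j, j ≠ M → r j ⬝ᵥ z = 0) → w ⬝ᵥ z = 0 → n ⬝ᵥ z = 0 → z = 0 := by
    intro z h1 h2 h3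
    by_contra hz
    refine hdet (Matrix.exists_mulVec_eq_zero_iff.1 ⟨z, hz, ?_⟩)
    funext i
    refine Fin.lastCases ?_ (fun j => ?_) i
    · simpa [Matrix.mulVec, -Fin.snoc_update] using h3
    · by_cases hj : j = M
      · subst hj; simpa [Matrix.mulVec, -Fin.snoc_update] using h2
      · simpa [Matrix.mulVec, hj, -Fin.snoc_update] using h1 j hj
  have hw'r : ∀ j, j ≠ M → w' ⬝ᵥ r j = 0 := by
    intro j hj
    rw [hw', sub_dotProduct, smul_dotProduct, dotProduct_comm w, dotProduct_comm n, hrw j hj, hrn j hj]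
    simp
  have hw'n : w' ⬝ᵥ n = 0 := by
    rw [hw', sub_dotProduct, smul_dotProduct, hn]; simp
  have hww : w = w' + (w ⬝ᵥ n) • n := by rw [hw']; simp
  have hψw : ψ ⬝ᵥ w = ψ ⬝ᵥ w' := by
    rw [hw', dotProduct_sub, dotProduct_smul, hψn]; simp
  have hw0 : w' ≠ 0 := by
    intro h0
    -- ψ is orthogonal to everything
    refine hψ (hker ψ (fun j hj => by rw [dotProduct_comm]; exact hψr j hj) ?_
      (by rw [dotProduct_comm]; exact hψn))
    rw [dotProduct_comm, hψw, h0]; simp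
  have hw2 : w' ⬝ᵥ w' ≠ 0 := fun h => hw0 (dotProduct_self_eq_zero.1 h)
  refine ⟨hw0, hψ, fun j hj => ⟨hw'r j hj, hψr j hj⟩, ?_⟩
  set s := (ψ ⬝ᵥ w') / (w' ⬝ᵥ w') with hs
  have hz : ψ - s • w' = 0 := by
    have e1 : (ψ - s • w') ⬝ᵥ n = 0 := by
      rw [sub_dotProduct, smul_dotProduct, hψn, hw'n]; simp
    refine hker _ (fun j hj => ?_) ?_ ?_
    · rw [dotProduct_comm, sub_dotProduct, smul_dotProduct, hψr j hj, hw'r j hj]; simp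
    · rw [hww, add_dotProduct, smul_dotProduct, dotProduct_comm n, e1, dotProduct_comm,
        sub_dotProduct, smul_dotProduct, hs]
      simp only [smul_eq_mul]
      field_simp
      simp
    · rw [dotProduct_comm, e1]
  have hψs : ψ = s • w' := sub_eq_zero.1 hz
  have hs0 : s ≠ 0 := by
    intro h; rw [h] at hψs; exact hψ (by simpa using hψs)
  refine ⟨s⁻¹, inv_ne_zero hs0, ?_⟩
  conv_rhs => rw [hψs]
  rw [smul_smul, inv_mul_cancel₀ hs0, one_smul]

/-- The block matrix of a linear change of parameters. -/
def auxB {m : ℕ} (L : (Fin m → ℝ) →L[ℝ] (Fin m → ℝ)) : Matrix (Fin (m+1)) (Fin (m+1)) ℝ :=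
  Matrix.of (Fin.snoc (fun k : Fin m => (Fin.snoc (L (Pi.single k 1)) (0:ℝ) : Fin (m+1) → ℝ))
    (Fin.snoc (fun _ : Fin m => (0:ℝ)) (1:ℝ) : Fin (m+1) → ℝ) : Fin (m+1) → Fin (m+1) → ℝ)

theorem auxB_det {m : ℕ} (L : (Fin m → ℝ) →L[ℝ] (Fin m → ℝ))
    (hL : ∀ X, L X = 0 → X = 0) : (auxB L).det ≠ 0 := by
  intro h
  obtain ⟨v, hv, hv0⟩ := Matrix.exists_vecMul_eq_zero_iff.2 h
  apply hv
  have h1 : v (Fin.last m) = 0 := by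
    have := congrFun hv0 (Fin.last m)
    simpa [Matrix.vecMul, dotProduct, auxB, Fin.sum_univ_castSucc] using this
  have h2 : (fun k : Fin m => v k.castSucc) = 0 := by
    apply hL
    rw [pi_eq_sum_univ' (fun k : Fin m => v k.castSucc), map_sum]
    funext j
    have := congrFun hv0 j.castSucc
    simpa [Matrix.vecMul, dotProduct, auxB, Fin.sum_univ_castSucc] using this
  funext i
  refine Fin.lastCases h1 (fun j => congrFun h2 j) i

theorem auxB_mul {m : ℕ} (L : (Fin m → ℝ) →L[ℝ] (Fin m → ℝ))
    (D : (Fin m → ℝ) →L[ℝ] (Fin (m+1) → ℝ)) (n : Fin (m+1) → ℝ) :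
    Matrix.of (Fin.snoc (fun k : Fin m => D (L (Pi.single k 1))) n : Fin (m+1) → Fin (m+1) → ℝ)
     = auxB L * Matrix.of (Fin.snoc (fun k : Fin m => D (Pi.single k 1)) n : Fin (m+1) → Fin (m+1) → ℝ) := by
  ext i l
  refine Fin.lastCases ?_ (fun k => ?_) i
  · simp [Matrix.mul_apply, auxB, Fin.sum_univ_castSucc]
  · simp only [Matrix.mul_apply, auxB, Fin.sum_univ_castSucc, Matrix.of_apply, Fin.snoc_castSucc,
      Fin.snoc_last, zero_mul, add_zero]
    conv_lhs => rw [pi_eq_sum_univ' (L (Pi.single k 1)), map_sum]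
    simp

theorem auxB_cont {m : ℕ} : Continuous (fun L : (Fin m → ℝ) →L[ℝ] (Fin m → ℝ) => (auxB L).det) := by
  apply Continuous.matrix_det
  refine continuous_matrix fun i j => ?_
  refine Fin.lastCases ?_ (fun k => ?_) i
  · simp only [auxB, Matrix.of_apply, Fin.snoc_last]; exact continuous_const
  · refine Fin.lastCases ?_ (fun l => ?_) j
    · simp only [auxB, Matrix.of_apply, Fin.snoc_last, Fin.snoc_castSucc]; exact continuous_const
    · simp only [auxB, Matrix.of_apply, Fin.snoc_castSucc]; fun_prop

/-- Slope of a determinant with one row vanishing at `0`. -/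
theorem aux_det_slope {m : ℕ} (M : Fin m) (r : ℝ → Fin m → Fin (m+1) → ℝ) (n : ℝ → Fin (m+1) → ℝ)
    (w : Fin (m+1) → ℝ) (hr : ContinuousAt r 0) (hn : ContinuousAt n 0)
    (h0 : r 0 M = 0) (hw : HasDerivAt (fun t => r t M) w 0) :
    Filter.Tendsto (fun t : ℝ => t⁻¹ *
      Matrix.det (Matrix.of (Fin.snoc (r t) (n t) : Fin (m+1) → Fin (m+1) → ℝ)))
      (nhdsWithin 0 {0}ᶜ)
      (nhds (Matrix.det (Matrix.of
        (Fin.snoc (Function.update (r 0) M w) (n 0) : Fin (m+1) → Fin (m+1) → ℝ)))) := by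
  have hs := hasDerivAt_iff_tendsto_slope.1 hw
  have e : ∀ t : ℝ, t⁻¹ *
      Matrix.det (Matrix.of (Fin.snoc (r t) (n t) : Fin (m+1) → Fin (m+1) → ℝ))
      = Matrix.det (Matrix.of (Fin.snoc (Function.update (r t) M (slope (fun t => r t M) 0 t)) (n t)
          : Fin (m+1) → Fin (m+1) → ℝ)) := by
    intro t
    have : slope (fun t => r t M) 0 t = t⁻¹ • r t M := by
      simp [slope, h0]
    rw [this, Fin.snoc_update]
    have h2 := Matrix.det_updateRow_smul (Matrix.of (Fin.snoc (r t) (n t) : Fin (m+1) → Fin (m+1) → ℝ))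
      M.castSucc t⁻¹ (r t M)
    have h3 : Matrix.updateRow (Matrix.of (Fin.snoc (r t) (n t) : Fin (m+1) → Fin (m+1) → ℝ)) M.castSucc (r t M)
       = Matrix.of (Fin.snoc (r t) (n t) : Fin (m+1) → Fin (m+1) → ℝ) := by
      ext i l
      rw [Matrix.updateRow_apply]
      split_ifs with hi
      · subst hi; simp
      · rfl
    rw [h3] at h2
    exact h2.symm
  simp_rw [e]
  have hc : Continuous fun A : Matrix (Fin (m+1)) (Fin (m+1)) ℝ => A.det :=
    Continuous.matrix_det continuous_id
  refine (hc.tendsto _).comp ?_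
  have hr' : Filter.Tendsto r (nhdsWithin 0 {0}ᶜ) (nhds (r 0)) := hr.tendsto.mono_left nhdsWithin_le_nhds
  have hn' : Filter.Tendsto n (nhdsWithin 0 {0}ᶜ) (nhds (n 0)) := hn.tendsto.mono_left nhdsWithin_le_nhds
  refine tendsto_pi_nhds.2 fun i => ?_
  refine Fin.lastCases ?_ (fun k => ?_) i
  · have e1 : ∀ (a : Fin m → Fin (m+1) → ℝ) (b : Fin (m+1) → ℝ),
        Matrix.of (Fin.snoc a b : Fin (m+1) → Fin (m+1) → ℝ) (Fin.last m) = b := by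
      intro a b; funext l; simp
    simp only [e1]
    exact hn'
  · have hk := tendsto_pi_nhds.1 (hr'.update M hs) k
    have e1 : ∀ (a : Fin m → Fin (m+1) → ℝ) (b : Fin (m+1) → ℝ),
        Matrix.of (Fin.snoc a b : Fin (m+1) → Fin (m+1) → ℝ) k.castSucc = a k := by
      intro a b; funext l; simp
    simp only [e1]
    exact hk

theorem aux_main {m : ℕ} (M : Fin m)
    (U : Set (Fin m → ℝ)) (hU : IsOpen U)
    (f ν : (Fin m → ℝ) → (Fin (m + 1) → ℝ))
    (hf : ContDiffOn ℝ (⊤ : ℕ∞) f U) (hν : ContDiffOn ℝ (⊤ : ℕ∞) ν U)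
    (hν1 : ∀ q ∈ U, ν q ⬝ᵥ ν q = 1)
    (htang : ∀ q ∈ U, ∀ k : Fin m, pd k f q ⬝ᵥ ν q = 0)
    (hfront : ∀ q ∈ U, ∀ X : Fin m → ℝ, fderiv ℝ f q X = 0 → fderiv ℝ ν q X = 0 → X = 0)
    (p : Fin m → ℝ) (hp : p ∈ U) (hA2 : IsA2 f ν p)
    (V : Set (Fin m → ℝ)) (o : Fin m → ℝ) (Φ Ψ : (Fin m → ℝ) → (Fin m → ℝ))
    (hV : IsOpen V) (ho : o ∈ V) (hΦ : ContDiffOn ℝ (⊤ : ℕ∞) Φ V)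
    (hΦV : IsOpen (Φ '' V)) (hΦU : Φ '' V ⊆ U) (hΦo : Φ o = p)
    (hΨ : ContDiffOn ℝ (⊤ : ℕ∞) Ψ (Φ '' V))
    (hΨΦ : ∀ x ∈ V, Ψ (Φ x) = x)
    (hsing : ∀ x ∈ V, (lamb f ν (Φ x) = 0 ↔ x M = 0))
    (hnull : ∀ x ∈ V, x M = 0 → pd M (f ∘ Φ) x = 0)
    (horth : ∀ j : Fin m, j ≠ M → pd j (f ∘ Φ) o ⬝ᵥ pd M (pd M (f ∘ Φ)) o = 0) :
    (pd M (pd M (f ∘ Φ)) o - (pd M (pd M (f ∘ Φ)) o ⬝ᵥ (ν ∘ Φ) o) • (ν ∘ Φ) o ≠ 0) ∧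
    pd M (ν ∘ Φ) o ≠ 0 ∧
    (∀ j : Fin m, j ≠ M →
      (pd M (pd M (f ∘ Φ)) o - (pd M (pd M (f ∘ Φ)) o ⬝ᵥ (ν ∘ Φ) o) • (ν ∘ Φ) o)
        ⬝ᵥ pd j (f ∘ Φ) o = 0 ∧
      pd M (ν ∘ Φ) o ⬝ᵥ pd j (f ∘ Φ) o = 0) ∧
    ∃ t : ℝ, t ≠ 0 ∧
      pd M (pd M (f ∘ Φ)) o - (pd M (pd M (f ∘ Φ)) o ⬝ᵥ (ν ∘ Φ) o) • (ν ∘ Φ) o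
        = t • pd M (ν ∘ Φ) o := by
  have hmaps : Set.MapsTo Φ V U := fun x hx => hΦU ⟨x, hx, rfl⟩
  have htop : ((⊤ : ℕ∞) : WithTop ℕ∞) ≠ 0 := by simp
  have hFs : ContDiffOn ℝ (⊤ : ℕ∞) (f ∘ Φ) V := hf.comp hΦ hmaps
  have hNs : ContDiffOn ℝ (⊤ : ℕ∞) (ν ∘ Φ) V := hν.comp hΦ hmaps
  have hVo : V ∈ nhds o := hV.mem_nhds ho
  have hdΦ : ∀ x ∈ V, DifferentiableAt ℝ Φ x := fun x hx =>
    (hΦ.contDiffAt (hV.mem_nhds hx)).differentiableAt htop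
  have hdf : ∀ x ∈ U, DifferentiableAt ℝ f x := fun x hx =>
    (hf.contDiffAt (hU.mem_nhds hx)).differentiableAt htop
  have hdν : ∀ x ∈ U, DifferentiableAt ℝ ν x := fun x hx =>
    (hν.contDiffAt (hU.mem_nhds hx)).differentiableAt htop
  have hFd : ∀ x ∈ V, fderiv ℝ (f ∘ Φ) x = (fderiv ℝ f (Φ x)).comp (fderiv ℝ Φ x) :=
    fun x hx => fderiv_comp x (hdf _ (hmaps hx)) (hdΦ x hx)
  have hNd : ∀ x ∈ V, fderiv ℝ (ν ∘ Φ) x = (fderiv ℝ ν (Φ x)).comp (fderiv ℝ Φ x) :=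
    fun x hx => fderiv_comp x (hdν _ (hmaps hx)) (hdΦ x hx)
  -- injectivity of the differential of Φ at o
  have hinj : ∀ X, fderiv ℝ Φ o X = 0 → X = 0 := by
    intro X hX
    have hdΨ : DifferentiableAt ℝ Ψ (Φ o) :=
      (hΨ.contDiffAt (hΦV.mem_nhds ⟨o, ho, rfl⟩)).differentiableAt htop
    have h1 : HasFDerivAt (Ψ ∘ Φ) ((fderiv ℝ Ψ (Φ o)).comp (fderiv ℝ Φ o)) o :=
      hdΨ.hasFDerivAt.comp o (hdΦ o ho).hasFDerivAt
    have h2 : HasFDerivAt (Ψ ∘ Φ) (ContinuousLinearMap.id ℝ (Fin m → ℝ)) o := by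
      refine (hasFDerivAt_id o).congr_of_eventuallyEq ?_
      filter_upwards [hVo] with x hx
      exact hΨΦ x hx
    have h3 := congrArg (fun L => L X) (h1.unique h2)
    simpa [hX] using h3.symm
  have hoM : o M = 0 := (hsing o ho).1 (by rw [hΦo]; exact hA2.1)
  have hn0 : pd M (f ∘ Φ) o = 0 := hnull o ho hoM
  set η : Fin m → ℝ := fderiv ℝ Φ o (Pi.single M 1) with hη
  have hη0 : η ≠ 0 := by
    intro h
    have := congrFun (hinj _ h) M
    simp at this
  have hfη : fderiv ℝ f p η = 0 := by
    have h := hn0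
    unfold pd at h
    rw [hFd o ho, hΦo] at h
    exact h
  have hlη := hA2.2.2 η hη0 hfη
  -- ψ ≠ 0
  have hψ : pd M (ν ∘ Φ) o ≠ 0 := by
    intro h
    unfold pd at h
    rw [hNd o ho, hΦo] at h
    exact hη0 (hfront p hp η hfη h)
  have hdF : DifferentiableAt ℝ (f ∘ Φ) o := (hFs.contDiffAt hVo).differentiableAt htop
  have hdN : DifferentiableAt ℝ (ν ∘ Φ) o := (hNs.contDiffAt hVo).differentiableAt htop
  have hdpd : ∀ k, DifferentiableAt ℝ (pd k (f ∘ Φ)) o := fun k =>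
    ((aux_contdiff_pd _ V hV hFs k).contDiffAt hVo).differentiableAt htop
  -- tangency in the new coordinates
  have htan : ∀ x ∈ V, ∀ k, pd k (f ∘ Φ) x ⬝ᵥ (ν ∘ Φ) x = 0 := by
    intro x hx k
    unfold pd
    rw [hFd x hx, ContinuousLinearMap.comp_apply,
      pi_eq_sum_univ' (fderiv ℝ Φ x (Pi.single k 1)), map_sum, sum_dotProduct]
    refine Finset.sum_eq_zero fun i _ => ?_
    rw [map_smul, smul_dotProduct]
    have := htang (Φ x) (hmaps hx) i
    unfold pd at this
    rw [Function.comp_apply, this, smul_zero]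
  have htan' : ∀ k, ∀ᶠ x in nhds o, pd k (f ∘ Φ) x ⬝ᵥ (ν ∘ Φ) x = 0 := fun k => by
    filter_upwards [hVo] with x hx
    exact htan x hx k
  have hψn : pd M (ν ∘ Φ) o ⬝ᵥ (ν ∘ Φ) o = 0 := by
    have := aux_dot_fderiv (ν ∘ Φ) (ν ∘ Φ) o M hdN hdN 1 (by
      filter_upwards [hVo] with x hx
      exact hν1 _ (hmaps hx))
    rw [dotProduct_comm ((ν ∘ Φ) o)] at this
    linarith
  have hψr : ∀ j, j ≠ M → pd M (ν ∘ Φ) o ⬝ᵥ pd j (f ∘ Φ) o = 0 := by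
    intro j _
    have h1 := aux_dot_fderiv (pd j (f ∘ Φ)) (ν ∘ Φ) o M (hdpd j) hdN 0 (htan' j)
    have h2 := aux_dot_fderiv (pd M (f ∘ Φ)) (ν ∘ Φ) o j (hdpd M) hdN 0 (htan' M)
    rw [hn0, zero_dotProduct, add_zero, aux_symm _ o (hFs.contDiffAt hVo)] at h2
    rw [h2, zero_add] at h1
    rw [dotProduct_comm, h1]
  -- determinant
  have hdet : Matrix.det (Matrix.of (Fin.snoc
      (Function.update (fun k => pd k (f ∘ Φ) o) M (pd M (pd M (f ∘ Φ)) o)) ((ν ∘ Φ) o) :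
      Fin (m+1) → Fin (m+1) → ℝ)) ≠ 0 := by
    set γ : ℝ → Fin m → ℝ := fun t => o + t • Pi.single M 1 with hγ
    have hγ0 : γ 0 = o := by simp [hγ]
    have hγd : HasDerivAt γ (Pi.single M 1) 0 := by
      have := ((hasDerivAt_id (0:ℝ)).smul_const (Pi.single M 1 : Fin m → ℝ)).const_add o
      rw [one_smul] at this
      exact this
    have hγc : ContinuousAt γ 0 := hγd.continuousAt
    have hγV : ∀ᶠ t in nhds (0:ℝ), γ t ∈ V := hγc (by rw [hγ0]; exact hVo)
    have hlim1 := aux_det_slope M (fun t k => pd k (f ∘ Φ) (γ t)) (fun t => (ν ∘ Φ) (γ t))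
      (pd M (pd M (f ∘ Φ)) o)
      (continuousAt_pi.2 fun k => ContinuousAt.comp (g := pd k (f ∘ Φ)) (f := γ) (by rw [hγ0]; exact (hdpd k).continuousAt) hγc)
      (ContinuousAt.comp (g := ν ∘ Φ) (f := γ) (by rw [hγ0]; exact hdN.continuousAt) hγc)
      (by simpa [hγ0] using hn0)
      (by
        have h1 : HasFDerivAt (pd M (f ∘ Φ)) (fderiv ℝ (pd M (f ∘ Φ)) o) (γ 0) := by
          rw [hγ0]; exact (hdpd M).hasFDerivAt
        exact h1.comp_hasDerivAt (0:ℝ) hγd)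
    simp only [hγ0] at hlim1
    have hld : DifferentiableAt ℝ (lamb f ν) p := by
      by_contra h
      exact hA2.2.1 (fderiv_zero_of_not_differentiableAt h)
    have hder : HasDerivAt (fun t => lamb f ν (Φ (γ t))) (fderiv ℝ (lamb f ν) p η) 0 := by
      have h1 : HasFDerivAt Φ (fderiv ℝ Φ o) (γ 0) := by
        rw [hγ0]; exact (hdΦ o ho).hasFDerivAt
      have h2 : HasDerivAt (fun t => Φ (γ t)) η 0 := h1.comp_hasDerivAt (0:ℝ) hγd
      have h3 : HasFDerivAt (lamb f ν) (fderiv ℝ (lamb f ν) p) (Φ (γ 0)) := by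
        rw [hγ0, hΦo]; exact hld.hasFDerivAt
      exact h3.comp_hasDerivAt (0:ℝ) h2
    have hslope := hasDerivAt_iff_tendsto_slope.1 hder
    have hΦ'c : ContinuousAt (fderiv ℝ Φ) o :=
      ((hΦ.fderiv_of_isOpen hV (m := (⊤ : ℕ∞)) (by simp)).contDiffAt hVo).continuousAt
    have hB : ContinuousAt (fun t => (auxB (fderiv ℝ Φ (γ t))).det) 0 := by
      refine auxB_cont.continuousAt.comp ?_
      exact ContinuousAt.comp (by rw [hγ0]; exact hΦ'c) hγc
    have hlim2 := (hB.tendsto.mono_left (nhdsWithin_le_nhds (s := {0}ᶜ))).mul hslope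
    have heq : (fun t => t⁻¹ * Matrix.det (Matrix.of (Fin.snoc (fun k => pd k (f ∘ Φ) (γ t))
        ((ν ∘ Φ) (γ t)) : Fin (m+1) → Fin (m+1) → ℝ))) =ᶠ[nhdsWithin 0 {0}ᶜ]
        (fun t => (auxB (fderiv ℝ Φ (γ t))).det * slope (fun t => lamb f ν (Φ (γ t))) 0 t) := by
      filter_upwards [nhdsWithin_le_nhds hγV] with t ht
      have h1 := auxB_mul (fderiv ℝ Φ (γ t)) (fderiv ℝ f (Φ (γ t))) (ν (Φ (γ t)))
      have h2 := congrArg Matrix.det h1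
      rw [Matrix.det_mul] at h2
      have h3 : lamb f ν (Φ (γ 0)) = 0 := by rw [hγ0, hΦo]; exact hA2.1
      simp only [slope, h3, vsub_eq_sub, sub_zero, smul_eq_mul]
      unfold pd lamb
      rw [hFd _ ht]
      simp only [ContinuousLinearMap.comp_apply, Function.comp_apply]
      rw [h2]
      unfold pd
      ring
    have hu := tendsto_nhds_unique (hlim1.congr' heq) hlim2
    rw [hu, hγ0]
    exact mul_ne_zero (auxB_det _ hinj) hlη
  exact aux_linalg M (fun k => pd k (f ∘ Φ) o) _ _ _ hdet
    (hν1 _ (hmaps ho)) (fun j _ => htan o ho j) horth hψ hψn hψr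

/-- In the coordinates of the coordinate lemma around an `A₂`-point of a front `(f, ν)`,
at the point `o` (corresponding to the `A₂`-point `p`), the tangential part
`D_m φ_m = ∂_m∂_m f̃ − ⟨∂_m∂_m f̃, ν̃⟩ ν̃` and the vector `ψ_m = ∂_m ν̃` are both nonzero
and orthogonal to `∂_1 f̃, …, ∂_{m−1} f̃`; in particular they are proportional. -/
theorem conormal_corollary_A2 {m : ℕ} (hm : 2 ≤ m)
    (U : Set (Fin m → ℝ)) (hU : IsOpen U)
    (f ν : (Fin m → ℝ) → (Fin (m + 1) → ℝ))
    (hf : ContDiffOn ℝ (⊤ : ℕ∞) f U) (hν : ContDiffOn ℝ (⊤ : ℕ∞) ν U)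
    (hν1 : ∀ q ∈ U, ν q ⬝ᵥ ν q = 1)
    (htang : ∀ q ∈ U, ∀ k : Fin m, pd k f q ⬝ᵥ ν q = 0)
    (hfront : ∀ q ∈ U, ∀ X : Fin m → ℝ, fderiv ℝ f q X = 0 → fderiv ℝ ν q X = 0 → X = 0)
    (p : Fin m → ℝ) (hp : p ∈ U) (hA2 : IsA2 f ν p)
    (V : Set (Fin m → ℝ)) (o : Fin m → ℝ) (Φ Ψ : (Fin m → ℝ) → (Fin m → ℝ))
    (hV : IsOpen V) (ho : o ∈ V) (hΦ : ContDiffOn ℝ (⊤ : ℕ∞) Φ V)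
    (hΦV : IsOpen (Φ '' V)) (hΦU : Φ '' V ⊆ U) (hΦo : Φ o = p)
    (hΨ : ContDiffOn ℝ (⊤ : ℕ∞) Ψ (Φ '' V))
    (hΨΦ : ∀ x ∈ V, Ψ (Φ x) = x) (hΦΨ : ∀ y ∈ Φ '' V, Φ (Ψ y) = y)
    (hsing : ∀ x ∈ V, (lamb f ν (Φ x) = 0 ↔ x ⟨m - 1, by omega⟩ = 0))
    (hnull : ∀ x ∈ V, x ⟨m - 1, by omega⟩ = 0 →
      pd (⟨m - 1, by omega⟩ : Fin m) (f ∘ Φ) x = 0)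
    (horth : ∀ j : Fin m, (j : ℕ) < m - 1 →
      pd j (f ∘ Φ) o ⬝ᵥ
        pd (⟨m - 1, by omega⟩ : Fin m) (pd (⟨m - 1, by omega⟩ : Fin m) (f ∘ Φ)) o = 0) :
    (pd (⟨m - 1, by omega⟩ : Fin m) (pd (⟨m - 1, by omega⟩ : Fin m) (f ∘ Φ)) o
        - (pd (⟨m - 1, by omega⟩ : Fin m) (pd (⟨m - 1, by omega⟩ : Fin m) (f ∘ Φ)) o
            ⬝ᵥ (ν ∘ Φ) o) • (ν ∘ Φ) o ≠ 0) ∧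
    pd (⟨m - 1, by omega⟩ : Fin m) (ν ∘ Φ) o ≠ 0 ∧
    (∀ j : Fin m, (j : ℕ) < m - 1 →
      (pd (⟨m - 1, by omega⟩ : Fin m) (pd (⟨m - 1, by omega⟩ : Fin m) (f ∘ Φ)) o
          - (pd (⟨m - 1, by omega⟩ : Fin m) (pd (⟨m - 1, by omega⟩ : Fin m) (f ∘ Φ)) o
              ⬝ᵥ (ν ∘ Φ) o) • (ν ∘ Φ) o) ⬝ᵥ pd j (f ∘ Φ) o = 0 ∧
      pd (⟨m - 1, by omega⟩ : Fin m) (ν ∘ Φ) o ⬝ᵥ pd j (f ∘ Φ) o = 0) ∧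
    ∃ t : ℝ, t ≠ 0 ∧
      pd (⟨m - 1, by omega⟩ : Fin m) (pd (⟨m - 1, by omega⟩ : Fin m) (f ∘ Φ)) o
          - (pd (⟨m - 1, by omega⟩ : Fin m) (pd (⟨m - 1, by omega⟩ : Fin m) (f ∘ Φ)) o
              ⬝ᵥ (ν ∘ Φ) o) • (ν ∘ Φ) o
        = t • pd (⟨m - 1, by omega⟩ : Fin m) (ν ∘ Φ) o := by
  have hne : ∀ j : Fin m, j ≠ (⟨m - 1, by omega⟩ : Fin m) ↔ (j : ℕ) < m - 1 := by
    intro j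
    have := j.2
    rw [Ne, Fin.ext_iff]
    simp only
    omega
  have h := aux_main (⟨m - 1, by omega⟩ : Fin m) U hU f ν hf hν hν1 htang hfront p hp hA2 V o Φ Ψ
    hV ho hΦ hΦV hΦU hΦo hΨ hΨΦ hsing hnull (fun j hj => horth j ((hne j).1 hj))
  exact ⟨h.1, h.2.1, fun j hj => h.2.2.1 j ((hne j).2 hj), h.2.2.2⟩
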